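/- arXiv:1808.07105 — 2 statements merged into one kernel-verified Lean document; each statement's English description precedes it below -/
import Mathlib

section
/- Let d ≥ 1, let b : ℝ^d → ℝ^d be L-Lipschitz (L > 0) and satisfy ⟨b(x), x⟩ ≤ M₂ − M₁|x|² for all x ∈ ℝ^d, with constants M₁, M₂ > 0. Let h > 0, let X be an ℝ^d-valued random variable with 𝔼|X|² < ∞, and let ξ be independent of X with law the d-fold product of standard Gaussians N(0,1). Then 𝔼|X + h·b(X) + √h·ξ|² ≤ (1 + 4h²L² − 2M₁h)·𝔼|X|² + 4h²|b(0)|² + 2hd + 2hM₂. -/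
open MeasureTheory ProbabilityTheory

/-- Standard Gaussian measure `N(0, I)` on `EuclideanSpace ℝ (Fin d)`
(the `d`-fold product of standard Gaussians `N(0,1)`). -/
noncomputable def stdGaussian (d : ℕ) : Measure (EuclideanSpace ℝ (Fin d)) :=
  (Measure.pi fun _ : Fin d => gaussianReal 0 1).map
    (MeasurableEquiv.toLp 2 (Fin d → ℝ))

/-- **Lemma (one-step second-moment estimate for the Euler scheme).**
If `b` is `L`-Lipschitz and satisfies the Lyapunov condition
`⟨b x, x⟩ ≤ M₂ - M₁‖x‖²`, `X` is square integrable and `ξ` is an independent standard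
Gaussian vector, then
`𝔼‖X + h b(X) + √h ξ‖² ≤ (1 + 4h²L² - 2M₁h) 𝔼‖X‖² + 4h²‖b 0‖² + 2hd + 2hM₂`. -/
theorem euler_one_step_second_moment
    {d : ℕ} (hd : 1 ≤ d) (b : EuclideanSpace ℝ (Fin d) → EuclideanSpace ℝ (Fin d))
    (L M₁ M₂ : ℝ) (hL : 0 < L) (hM₁ : 0 < M₁) (hM₂ : 0 < M₂)
    (hLip : ∀ x y : EuclideanSpace ℝ (Fin d), ‖b x - b y‖ ≤ L * ‖x - y‖)
    (hLyap : ∀ x : EuclideanSpace ℝ (Fin d),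
      @inner ℝ _ _ (b x) x ≤ M₂ - M₁ * ‖x‖ ^ 2)
    (h : ℝ) (hh : 0 < h)
    {Ω : Type*} [MeasureSpace Ω] [IsProbabilityMeasure (ℙ : Measure Ω)]
    (X ξ : Ω → EuclideanSpace ℝ (Fin d))
    (hXmeas : Measurable X) (hξmeas : Measurable ξ)
    (hXsq : Integrable (fun ω => ‖X ω‖ ^ 2) ℙ)
    (hξlaw : Measure.map ξ ℙ = stdGaussian d)
    (hindep : IndepFun X ξ ℙ) :
    ∫ ω, ‖X ω + h • b (X ω) + Real.sqrt h • ξ ω‖ ^ 2 ∂ℙ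
      ≤ (1 + 4 * h ^ 2 * L ^ 2 - 2 * M₁ * h) * ∫ ω, ‖X ω‖ ^ 2 ∂ℙ
        + 4 * h ^ 2 * ‖b 0‖ ^ 2 + 2 * h * d + 2 * h * M₂ := by
  have hbcont : Continuous b := by
    have : LipschitzWith ⟨L, hL.le⟩ b := by
      apply LipschitzWith.of_dist_le_mul
      intro x y
      rw [dist_eq_norm, dist_eq_norm]
      exact hLip x y
    exact this.continuous
  have hbX : Measurable fun ω => b (X ω) := hbcont.measurable.comp hXmeas
  -- coordinates of the noise
  have hlaw : ∀ i, Measure.map (fun ω => ξ ω i) ℙ = gaussianReal 0 1 := by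
    intro i
    have hev : Measurable fun x : EuclideanSpace ℝ (Fin d) => x i := by fun_prop
    have h1 : Measure.map (fun ω => ξ ω i) ℙ
        = Measure.map (fun x : EuclideanSpace ℝ (Fin d) => x i) (Measure.map ξ ℙ) := by
      rw [Measure.map_map hev hξmeas]
      rfl
    rw [h1, hξlaw, _root_.stdGaussian, Measure.map_map hev (MeasurableEquiv.measurable _)]
    exact (measurePreserving_eval (fun _ : Fin d => gaussianReal 0 1) i).map_eq
  have hξi : ∀ i, Measurable fun ω => ξ ω i := fun i => by fun_prop
  have hξL2 : ∀ i, MemLp (fun ω => ξ ω i) 2 ℙ := by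
    intro i
    have h1 : MemLp id 2 (Measure.map (fun ω => ξ ω i) ℙ) := by
      rw [hlaw i]
      exact memLp_id_gaussianReal' 2 (by simp)
    exact (memLp_map_measure_iff (by fun_prop) (hξi i).aemeasurable).1 h1
  have hξint : ∀ i, Integrable (fun ω => ξ ω i) ℙ := fun i =>
    (hξL2 i).integrable (by norm_num)
  have hξmean : ∀ i, ∫ ω, ξ ω i ∂ℙ = 0 := by
    intro i
    have h1 := integral_map (μ := (ℙ : Measure Ω)) (hξi i).aemeasurable
      (f := fun x : ℝ => x) (by fun_prop)
    rw [hlaw i, integral_id_gaussianReal] at h1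
    exact h1.symm
  have hξsqint : ∀ i, Integrable (fun ω => ξ ω i ^ 2) ℙ := fun i => (hξL2 i).integrable_sq
  have hξsq : ∀ i, ∫ ω, ξ ω i ^ 2 ∂ℙ = 1 := by
    intro i
    have h1 := integral_map (μ := (ℙ : Measure Ω)) (hξi i).aemeasurable
      (f := fun x : ℝ => x ^ 2) (by fun_prop)
    have h2 := variance_id_gaussianReal (μ := 0) (v := 1)
    rw [variance_of_integral_eq_zero (by fun_prop) (by simp)] at h2
    rw [← h1, hlaw i]
    simpa using h2
  -- the drift part
  set Y : Ω → EuclideanSpace ℝ (Fin d) := fun ω => X ω + h • b (X ω) with hY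
  have hYmeas : Measurable Y := hXmeas.add (hbX.const_smul h)
  have hYbound : ∀ ω, ‖Y ω‖ ^ 2 ≤ (1 + 2 * h ^ 2 * L ^ 2 - 2 * M₁ * h) * ‖X ω‖ ^ 2
      + (2 * h ^ 2 * ‖b 0‖ ^ 2 + 2 * h * M₂) := by
    intro ω
    have e : ‖Y ω‖ ^ 2 = ‖X ω‖ ^ 2 + 2 * h * inner ℝ (b (X ω)) (X ω)
        + h ^ 2 * ‖b (X ω)‖ ^ 2 := by
      simp only [hY]
      rw [norm_add_sq_real, inner_smul_right, norm_smul, mul_pow, real_inner_comm,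
        Real.norm_eq_abs, sq_abs]
      ring
    have hb1 : ‖b (X ω)‖ ≤ L * ‖X ω‖ + ‖b 0‖ := by
      have h1 := hLip (X ω) 0
      rw [sub_zero] at h1
      have h2 := norm_sub_norm_le (b (X ω)) (b 0)
      linarith
    have hb2 : ‖b (X ω)‖ ^ 2 ≤ 2 * L ^ 2 * ‖X ω‖ ^ 2 + 2 * ‖b 0‖ ^ 2 := by
      have h1 := pow_le_pow_left₀ (norm_nonneg _) hb1 2
      nlinarith [sq_nonneg (L * ‖X ω‖ - ‖b 0‖)]
    have h3 := mul_le_mul_of_nonneg_left (hLyap (X ω)) hh.le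
    have h4 := mul_le_mul_of_nonneg_left hb2 (sq_nonneg h)
    rw [e]
    nlinarith
  have hBint : Integrable (fun ω => (1 + 2 * h ^ 2 * L ^ 2 - 2 * M₁ * h) * ‖X ω‖ ^ 2
      + (2 * h ^ 2 * ‖b 0‖ ^ 2 + 2 * h * M₂)) ℙ :=
    (hXsq.const_mul _).add (integrable_const _)
  have hYsq : Integrable (fun ω => ‖Y ω‖ ^ 2) ℙ := by
    refine hBint.mono' (by fun_prop) (Filter.Eventually.of_forall fun ω => ?_)
    rw [Real.norm_of_nonneg (by positivity)]
    exact hYbound ω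
  have hYL2 : MemLp Y 2 ℙ :=
    (memLp_two_iff_integrable_sq_norm hYmeas.aestronglyMeasurable).2 hYsq
  have hYint : Integrable Y ℙ := hYL2.integrable (by norm_num)
  have hYi : ∀ i, Integrable (fun ω => Y ω i) ℙ := by
    intro i
    refine hYint.norm.mono' (by fun_prop) (Filter.Eventually.of_forall fun ω => ?_)
    exact PiLp.norm_apply_le (Y ω) i
  have hind : ∀ i, IndepFun (fun ω => Y ω i) (fun ω => ξ ω i) ℙ := by
    intro i
    have hφ : Measurable fun x : EuclideanSpace ℝ (Fin d) => (x + h • b x) i := by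
      have := hbcont.measurable
      fun_prop
    have hψ : Measurable fun x : EuclideanSpace ℝ (Fin d) => x i := by fun_prop
    exact hindep.comp hφ hψ
  have hprod : ∀ i, Integrable (fun ω => Y ω i * ξ ω i) ℙ := fun i =>
    (hind i).integrable_mul (hYi i) (hξint i)
  have hprod0 : ∀ i, ∫ ω, Y ω i * ξ ω i ∂ℙ = 0 := by
    intro i
    rw [(hind i).integral_fun_mul_eq_mul_integral (hYi i).aestronglyMeasurable
      (hξint i).aestronglyMeasurable, hξmean i, mul_zero]
  have hexp : ∀ ω, ‖Y ω + Real.sqrt h • ξ ω‖ ^ 2 = ‖Y ω‖ ^ 2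
      + 2 * Real.sqrt h * (∑ i, Y ω i * ξ ω i) + h * ∑ i, ξ ω i ^ 2 := by
    intro ω
    have h1 : inner ℝ (Y ω) (ξ ω) = ∑ i, Y ω i * ξ ω i := by
      simp [PiLp.inner_apply, mul_comm]
    have h2 : ‖ξ ω‖ ^ 2 = ∑ i, ξ ω i ^ 2 := by
      simp [EuclideanSpace.norm_sq_eq]
    rw [norm_add_sq_real, inner_smul_right, norm_smul, mul_pow, Real.norm_eq_abs, sq_abs,
      Real.sq_sqrt hh.le, h1, h2]
    ring
  have hS1 : Integrable (fun ω => ∑ i, Y ω i * ξ ω i) ℙ :=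
    integrable_finsetSum _ fun i _ => hprod i
  have hS2 : Integrable (fun ω => ∑ i, ξ ω i ^ 2) ℙ :=
    integrable_finsetSum _ fun i _ => hξsqint i
  have hI : ∫ ω, ‖Y ω + Real.sqrt h • ξ ω‖ ^ 2 ∂ℙ = ∫ ω, ‖Y ω‖ ^ 2 ∂ℙ + h * d := by
    simp_rw [hexp]
    have hA : Integrable (fun ω => ‖Y ω‖ ^ 2
        + 2 * Real.sqrt h * (∑ i, Y ω i * ξ ω i)) ℙ := hYsq.add (hS1.const_mul _)
    rw [integral_add hA (hS2.const_mul _),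
      integral_add hYsq (hS1.const_mul _), integral_const_mul, integral_const_mul,
      integral_finsetSum _ (fun i _ => hprod i), integral_finsetSum _ (fun i _ => hξsqint i)]
    simp [hprod0, hξsq]
  have hle := integral_mono hYsq hBint hYbound
  rw [integral_add (hXsq.const_mul _) (integrable_const _), integral_const_mul] at hle
  simp only [integral_const, probReal_univ, one_smul] at hle
  have hX0 : 0 ≤ ∫ ω, ‖X ω‖ ^ 2 ∂ℙ := integral_nonneg fun ω => by positivity
  have hp1 : 0 ≤ 2 * h ^ 2 * L ^ 2 * ∫ ω, ‖X ω‖ ^ 2 ∂ℙ := by positivity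
  have hp2 : 0 ≤ 2 * h ^ 2 * ‖b 0‖ ^ 2 := by positivity
  have hp3 : 0 ≤ h * d := by positivity
  rw [hI]
  linarith
end

section
/- Let d ≥ 1 and let b : ℝ^d → ℝ^d satisfy Assumptions (A); set M₁ := K/2 and M₂ := L·(max(R, 2|b(0)|/K))² + |b(0)|·max(R, 2|b(0)|/K). On a probability space let (ξ_k)_{k≥1} be i.i.d. with law the d-fold product of standard Gaussians N(0,1), let X₀ be an ℝ^d-valued random variable with 𝔼|X₀|² < ∞, with X₀, ξ₁, ξ₂, … jointly independent, and define the Euler chain X_{k+1} := X_k + h·b(X_k) + √h·ξ_{k+1} for k ≥ 0. Then for every h with 0 < h < K/(4L²) and every k ≥ 1: 𝔼|X_k|² ≤ 𝔼|X₀|² + (2h|b(0)|² + d + M₂)/(M₁ − 2hL²). -/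
open scoped Classical
open MeasureTheory ProbabilityTheory

lemma aux_lyap {E : Type*} [NormedAddCommGroup E] [InnerProductSpace ℝ E] (b : E → E)
    (L K R : ℝ) (hL : 0 < L) (hK : 0 < K) (hR : 0 < R)
    (hLip : ∀ x y : E, ‖b x - b y‖ ≤ L * ‖x - y‖)
    (hContr : ∀ x y : E, R < ‖x - y‖ →
      @inner ℝ _ _ (x - y) (b x - b y) ≤ -K * ‖x - y‖ ^ 2) (x : E) :
    @inner ℝ _ _ x (b x) ≤ (L * (max R (2 * ‖b 0‖ / K)) ^ 2 + ‖b 0‖ * max R (2 * ‖b 0‖ / K))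
      - K / 2 * ‖x‖ ^ 2 := by
  set m := max R (2 * ‖b 0‖ / K) with hm
  have hmR : R ≤ m := le_max_left _ _
  have hmb : ‖b 0‖ ≤ K / 2 * m := by
    have h1 : 2 * ‖b 0‖ / K ≤ m := le_max_right _ _
    rw [div_le_iff₀ hK] at h1
    linarith
  have hb0 : 0 ≤ ‖b 0‖ := norm_nonneg _
  have hx0 : 0 ≤ ‖x‖ := norm_nonneg _
  have hxb0 : @inner ℝ _ _ x (b 0) ≤ ‖x‖ * ‖b 0‖ := real_inner_le_norm _ _
  have hR2 : R ^ 2 ≤ m ^ 2 := by gcongr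
  have hLR : L * R ^ 2 ≤ L * m ^ 2 := by gcongr
  have hLR0 : 0 ≤ L * R ^ 2 := by positivity
  rcases lt_or_ge R ‖x‖ with hx | hx
  · have h1 := hContr x 0 (by simpa using hx)
    simp only [sub_zero, inner_sub_right] at h1
    have h2 : ‖x‖ * ‖b 0‖ ≤ ‖b 0‖ * m + K / 2 * ‖x‖ ^ 2 := by
      rcases le_total ‖x‖ m with h3 | h3
      · have : ‖x‖ * ‖b 0‖ ≤ m * ‖b 0‖ := by gcongr
        have : 0 ≤ K / 2 * ‖x‖ ^ 2 := by positivity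
        linarith
      · have : ‖b 0‖ ≤ K / 2 * ‖x‖ := hmb.trans (by gcongr)
        have : ‖x‖ * ‖b 0‖ ≤ ‖x‖ * (K / 2 * ‖x‖) := by gcongr
        have : 0 ≤ ‖b 0‖ * m := mul_nonneg hb0 (hR.le.trans hmR)
        linarith
    linarith
  · rcases eq_or_lt_of_le hx0 with h0 | h0
    · have hx' : x = 0 := norm_eq_zero.mp h0.symm
      have : 0 ≤ ‖b 0‖ * m := mul_nonneg hb0 (hR.le.trans hmR)
      subst hx'
      simp
      linarith
    · set c : ℝ := R ^ 2 / ‖x‖ ^ 2 with hc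
      have hcpos : 0 < c := by positivity
      have hcx : c * ‖x‖ ^ 2 = R ^ 2 := by rw [hc]; field_simp
      have hn : ‖(1 + c) • x‖ = (1 + c) * ‖x‖ := by
        rw [norm_smul, Real.norm_of_nonneg (by positivity)]
      have hbig : R < ‖(1 + c) • x - 0‖ := by
        rw [sub_zero, hn]
        nlinarith
      have h1 := hContr ((1 + c) • x) 0 hbig
      simp only [sub_zero, hn, real_inner_smul_left] at h1
      have h2 : @inner ℝ _ _ x (b ((1 + c) • x) - b 0) ≤ -K * ((1 + c) * ‖x‖ ^ 2) := by
        have hp : 0 < 1 + c := by positivity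
        refine le_of_mul_le_mul_left ?_ hp
        calc _ ≤ _ := h1
          _ = _ := by ring
      have h3 : @inner ℝ _ _ x (b x - b ((1 + c) • x)) ≤ L * R ^ 2 := by
        calc _ ≤ ‖x‖ * ‖b x - b ((1 + c) • x)‖ := real_inner_le_norm _ _
          _ ≤ ‖x‖ * (L * ‖x - (1 + c) • x‖) := by gcongr; exact hLip _ _
          _ = ‖x‖ * (L * (c * ‖x‖)) := by
              have : x - (1 + c) • x = -(c • x) := by module
              rw [this, norm_neg, norm_smul, Real.norm_of_nonneg hcpos.le]
          _ = L * (c * ‖x‖ ^ 2) := by ring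
          _ = _ := by rw [hcx]
      simp only [inner_sub_right] at h2 h3
      have h4 : ‖x‖ * ‖b 0‖ ≤ m * ‖b 0‖ := by gcongr; linarith
      have h5 : 0 ≤ K * R ^ 2 := by positivity
      have h6 : 0 ≤ K * ‖x‖ ^ 2 := by positivity
      have h7 : -K * ((1 + c) * ‖x‖ ^ 2) = -(K * ‖x‖ ^ 2) - K * R ^ 2 := by
        rw [← hcx]; ring
      linarith

lemma aux_KL {d : ℕ} (hd : 1 ≤ d) (b : EuclideanSpace ℝ (Fin d) → EuclideanSpace ℝ (Fin d))
    (L K R : ℝ) (hR : 0 < R)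
    (hLip : ∀ x y : EuclideanSpace ℝ (Fin d), ‖b x - b y‖ ≤ L * ‖x - y‖)
    (hContr : ∀ x y : EuclideanSpace ℝ (Fin d), R < ‖x - y‖ →
      @inner ℝ _ _ (x - y) (b x - b y) ≤ -K * ‖x - y‖ ^ 2) : K ≤ L := by
  set x : EuclideanSpace ℝ (Fin d) := EuclideanSpace.single ⟨0, hd⟩ (R + 1) with hx
  have hn : ‖x - 0‖ = R + 1 := by
    rw [sub_zero, hx, EuclideanSpace.norm_single, Real.norm_of_nonneg (by linarith)]
  have h1 := hContr x 0 (by rw [hn]; linarith)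
  have h2 := hLip x 0
  have h3 := neg_le_of_abs_le (abs_real_inner_le_norm (x - 0) (b x - b 0))
  have h4 : ‖x - 0‖ * ‖b x - b 0‖ ≤ ‖x - 0‖ * (L * ‖x - 0‖) := by gcongr
  rw [hn] at h1 h3 h4
  have h5 : K * (R + 1) ^ 2 ≤ L * (R + 1) ^ 2 := by nlinarith
  exact le_of_mul_le_mul_right h5 (by positivity)

lemma aux_law {d : ℕ} (i : Fin d) :
    (_root_.stdGaussian d).map (fun x => x i) = gaussianReal 0 1 := by
  unfold _root_.stdGaussian
  rw [Measure.map_map (by fun_prop) (by fun_prop)]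
  exact (measurePreserving_eval (fun _ : Fin d => gaussianReal 0 1) i).map_eq

lemma aux_coord {Ω : Type*} [MeasurableSpace Ω] {μ : Measure Ω} {d : ℕ}
    {Z : Ω → EuclideanSpace ℝ (Fin d)} (hZ : Measurable Z)
    (hlaw : μ.map Z = _root_.stdGaussian d) (i : Fin d) :
    MemLp (fun ω => Z ω i) 2 μ ∧ ∫ ω, Z ω i ∂μ = 0 ∧ ∫ ω, (Z ω i) ^ 2 ∂μ = 1 := by
  have hm : Measurable (fun ω => Z ω i) := by fun_prop
  have hmap : μ.map (fun ω => Z ω i) = gaussianReal 0 1 := by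
    rw [← aux_law i, ← hlaw, Measure.map_map (by fun_prop) hZ]
    rfl
  refine ⟨?_, ?_, ?_⟩
  · have h := memLp_id_gaussianReal' (μ := 0) (v := 1) 2 (by simp)
    rw [← hmap] at h
    exact (memLp_map_measure_iff h.1 hm.aemeasurable).mp h
  · have h := integral_map (μ := μ) hm.aemeasurable (f := fun x : ℝ => x) (by fun_prop)
    rw [← h, hmap, integral_id_gaussianReal]
  · have h := integral_map (μ := μ) hm.aemeasurable (f := fun x : ℝ => x ^ 2) (by fun_prop)
    rw [← h, hmap]
    have h2 := variance_id_gaussianReal (μ := 0) (v := 1)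
    rw [variance_eq_integral (by fun_prop)] at h2
    simpa using h2

lemma aux_step {Ω : Type*} [MeasurableSpace Ω] {μ : Measure Ω} [IsProbabilityMeasure μ] {d : ℕ}
    {Y Z : Ω → EuclideanSpace ℝ (Fin d)} (hY : Measurable Y) (hZ : Measurable Z)
    (hlaw : μ.map Z = _root_.stdGaussian d) (hYZ : IndepFun Y Z μ)
    (hY2 : Integrable (fun ω => ‖Y ω‖ ^ 2) μ) (h : ℝ) (hh : 0 ≤ h) :
    Integrable (fun ω => ‖Y ω + Real.sqrt h • Z ω‖ ^ 2) μ ∧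
    ∫ ω, ‖Y ω + Real.sqrt h • Z ω‖ ^ 2 ∂μ = ∫ ω, ‖Y ω‖ ^ 2 ∂μ + h * d := by
  have hYL : MemLp Y 2 μ := (memLp_two_iff_integrable_sq_norm hY.aestronglyMeasurable).mpr hY2
  have hYi : ∀ i, MemLp (fun ω => Y ω i) 2 μ := fun i => by
    refine hYL.mono (by fun_prop) (Filter.Eventually.of_forall fun ω => ?_)
    exact PiLp.norm_apply_le (Y ω) i
  have hexp : ∀ ω, ‖Y ω + Real.sqrt h • Z ω‖ ^ 2
      = ‖Y ω‖ ^ 2 + (2 * Real.sqrt h * ∑ i, Y ω i * Z ω i + h * ∑ i, (Z ω i) ^ 2) := fun ω => by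
    rw [norm_add_sq_real, norm_smul, mul_pow, EuclideanSpace.real_norm_sq_eq (Z ω),
      real_inner_smul_right, PiLp.inner_apply, Real.norm_eq_abs, sq_abs, Real.sq_sqrt hh]
    simp only [RCLike.inner_apply, conj_trivial]
    have : ∑ i, Z ω i * Y ω i = ∑ i, Y ω i * Z ω i :=
      Finset.sum_congr rfl fun i _ => mul_comm _ _
    rw [this]
    ring
  have hZi := fun i => aux_coord hZ hlaw i
  have hint1 : ∀ i, Integrable (fun ω => Y ω i * Z ω i) μ := fun i =>
    (hYi i).integrable_mul (hZi i).1
  have hint2 : ∀ i, Integrable (fun ω => (Z ω i) ^ 2) μ := fun i => (hZi i).1.integrable_sq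
  have hS1 : Integrable (fun ω => 2 * Real.sqrt h * ∑ i, Y ω i * Z ω i) μ :=
    (integrable_finsetSum _ fun i _ => hint1 i).const_mul _
  have hS2 : Integrable (fun ω => h * ∑ i, (Z ω i) ^ 2) μ :=
    (integrable_finsetSum _ fun i _ => hint2 i).const_mul _
  have hzero : ∀ i, ∫ ω, Y ω i * Z ω i ∂μ = 0 := fun i => by
    have hind : IndepFun (fun ω => Y ω i) (fun ω => Z ω i) μ :=
      hYZ.comp (φ := fun x : EuclideanSpace ℝ (Fin d) => x i)
        (ψ := fun x : EuclideanSpace ℝ (Fin d) => x i) (by fun_prop) (by fun_prop)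
    rw [hind.integral_fun_mul_eq_mul_integral (by fun_prop) (by fun_prop), (hZi i).2.1, mul_zero]
  simp only [hexp]
  have hS3 : Integrable (fun ω => 2 * Real.sqrt h * ∑ i, Y ω i * Z ω i + h * ∑ i, (Z ω i) ^ 2) μ :=
    hS1.add hS2
  refine ⟨hY2.add hS3, ?_⟩
  rw [integral_add hY2 hS3, integral_add hS1 hS2, integral_const_mul, integral_const_mul,
    integral_finsetSum _ fun i _ => hint1 i, integral_finsetSum _ fun i _ => hint2 i]
  simp [hzero, fun i => (hZi i).2.2]


/-- **Lemma (uniform-in-time second-moment bound for the Euler chain).**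
Under the Lipschitz and contractivity-at-infinity assumptions on `b`, with
`M₁ = K/2` and `M₂ = L (max(R, 2‖b 0‖/K))² + ‖b 0‖ max(R, 2‖b 0‖/K)`, the Euler chain
`X_{k+1} = X_k + h b(X_k) + √h ξ_{k+1}` driven by i.i.d. standard Gaussians, with
`X₀, ξ₁, ξ₂, …` jointly independent, satisfies for every `0 < h < K/(4L²)` and `k ≥ 1`:
`𝔼‖X_k‖² ≤ 𝔼‖X₀‖² + (2h‖b 0‖² + d + M₂)/(M₁ - 2hL²)`. -/
theorem euler_chain_uniform_second_moment
    {d : ℕ} (hd : 1 ≤ d) (b : EuclideanSpace ℝ (Fin d) → EuclideanSpace ℝ (Fin d))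
    (L K R : ℝ) (hL : 0 < L) (hK : 0 < K) (hR : 0 < R)
    (hLip : ∀ x y : EuclideanSpace ℝ (Fin d), ‖b x - b y‖ ≤ L * ‖x - y‖)
    (hContr : ∀ x y : EuclideanSpace ℝ (Fin d), R < ‖x - y‖ →
      @inner ℝ _ _ (x - y) (b x - b y) ≤ -K * ‖x - y‖ ^ 2)
    (h : ℝ) (hh : 0 < h) (hhK : h < K / (4 * L ^ 2))
    {Ω : Type*} [MeasureSpace Ω] [IsProbabilityMeasure (ℙ : Measure Ω)]
    (X : ℕ → Ω → EuclideanSpace ℝ (Fin d)) (ξ : ℕ → Ω → EuclideanSpace ℝ (Fin d))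
    (hXmeas : Measurable (X 0)) (hξmeas : ∀ k, Measurable (ξ k))
    (hX0sq : Integrable (fun ω => ‖X 0 ω‖ ^ 2) ℙ)
    (hξlaw : ∀ k, 1 ≤ k → Measure.map (ξ k) ℙ = stdGaussian d)
    (hIndep : iIndep (fun k : ℕ =>
        if k = 0 then MeasurableSpace.comap (X 0) inferInstance
        else MeasurableSpace.comap (ξ k) inferInstance) ℙ)
    (hrec : ∀ (k : ℕ) (ω : Ω),
      X (k + 1) ω = X k ω + h • b (X k ω) + Real.sqrt h • ξ (k + 1) ω)
    (k : ℕ) (hk : 1 ≤ k) :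
    ∫ ω, ‖X k ω‖ ^ 2 ∂ℙ
      ≤ ∫ ω, ‖X 0 ω‖ ^ 2 ∂ℙ
        + (2 * h * ‖b 0‖ ^ 2 + d
            + (L * (max R (2 * ‖b 0‖ / K)) ^ 2 + ‖b 0‖ * max R (2 * ‖b 0‖ / K)))
          / (K / 2 - 2 * h * L ^ 2) := by
  have hbc : Continuous b := by
    have : LipschitzWith ⟨L, hL.le⟩ b := LipschitzWith.of_dist_le_mul fun x y => by
      rw [dist_eq_norm, dist_eq_norm]; exact hLip x y
    exact this.continuous
  have hbm : Measurable b := hbc.measurable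
  set m : ℕ → MeasurableSpace Ω := fun k : ℕ =>
        if k = 0 then MeasurableSpace.comap (X 0) inferInstance
        else MeasurableSpace.comap (ξ k) inferInstance with hm
  have hm_le : ∀ i, m i ≤ MeasureSpace.toMeasurableSpace := fun i => by
    simp only [hm]
    split_ifs
    · exact hXmeas.comap_le
    · exact (hξmeas i).comap_le
  have hXad : ∀ n, Measurable[⨆ i ∈ Set.Iic n, m i] (X n) := fun n => by
    induction n with
    | zero =>
      have h1 : m 0 ≤ ⨆ i ∈ Set.Iic 0, m i := le_iSup₂_of_le 0 (by simp) le_rfl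
      have h0 : m 0 = MeasurableSpace.comap (X 0) inferInstance := by simp [hm]
      exact Measurable.mono (comap_measurable (X 0)) (h0.symm.le.trans h1) le_rfl
    | succ n ih =>
      have h1 : m (n + 1) ≤ ⨆ i ∈ Set.Iic (n + 1), m i := le_iSup₂_of_le (n + 1) (by simp) le_rfl
      have h2 : (⨆ i ∈ Set.Iic n, m i) ≤ ⨆ i ∈ Set.Iic (n + 1), m i :=
        biSup_mono fun i hi => by simp only [Set.mem_Iic] at *; omega
      have hX := ih.mono h2 le_rfl
      have hξ : Measurable[⨆ i ∈ Set.Iic (n + 1), m i] (ξ (n + 1)) := by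
        have h0 : m (n + 1) = MeasurableSpace.comap (ξ (n + 1)) inferInstance := by simp [hm]
        exact Measurable.mono (comap_measurable (ξ (n + 1))) (h0.symm.le.trans h1) le_rfl
      have hEq : X (n + 1) = fun ω => X n ω + h • b (X n ω) + Real.sqrt h • ξ (n + 1) ω :=
        funext fun ω => hrec n ω
      rw [hEq]
      exact (hX.add ((hbm.comp hX).const_smul h)).add (hξ.const_smul (Real.sqrt h))
  have hXm : ∀ n, Measurable (X n) := fun n =>
    (hXad n).mono (iSup₂_le fun i _ => hm_le i) le_rfl
  have hXξ : ∀ n, IndepFun (X n) (ξ (n + 1)) ℙ := fun n => by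
    rw [IndepFun_iff_Indep]
    have hdis : Disjoint (Set.Iic n) ({n + 1} : Set ℕ) := by simp
    have h1 := indep_iSup_of_disjoint hm_le hIndep hdis
    refine indep_of_indep_of_le_left (indep_of_indep_of_le_right h1 ?_) (hXad n).comap_le
    simp [hm]
  have hKL := aux_KL hd b L K R hR hLip hContr
  have hly := aux_lyap b L K R hL hK hR hLip hContr
  set M := L * (max R (2 * ‖b 0‖ / K)) ^ 2 + ‖b 0‖ * max R (2 * ‖b 0‖ / K) with hM
  have hMnn : 0 ≤ M := by
    have : 0 ≤ max R (2 * ‖b 0‖ / K) := hR.le.trans (le_max_left _ _)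
    positivity
  have hhL : h * (4 * L ^ 2) < K := by rwa [lt_div_iff₀ (by positivity)] at hhK
  have hq : 0 < K / 2 - 2 * h * L ^ 2 := by linarith
  set B := (2 * h * ‖b 0‖ ^ 2 + d + M) / (K / 2 - 2 * h * L ^ 2) with hB
  have hBnn : 0 ≤ B := by positivity
  have hBq : B * (K / 2 - 2 * h * L ^ 2) = 2 * h * ‖b 0‖ ^ 2 + d + M := by
    rw [hB, div_mul_cancel₀ _ hq.ne']
  have hρ0 : 0 ≤ 1 - h * (K - 2 * h * L ^ 2) := by
    have h1 : h * (4 * L ^ 2) < L := by linarith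
    have h2 : h * (4 * L) < 1 := by
      by_contra! hcon
      nlinarith
    have h3 : h * K ≤ h * L := by gcongr
    have h4 : 0 ≤ h ^ 2 * L ^ 2 := by positivity
    nlinarith
  have hpt : ∀ x, ‖x + h • b x‖ ^ 2 ≤ (1 - h * (K - 2 * h * L ^ 2)) * ‖x‖ ^ 2
      + h * (2 * M + 2 * h * ‖b 0‖ ^ 2) := fun x => by
    rw [norm_add_sq_real, norm_smul, real_inner_smul_right, mul_pow, Real.norm_eq_abs, sq_abs]
    have h1 : ‖b x‖ ≤ L * ‖x‖ + ‖b 0‖ := by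
      have h2 := hLip x 0
      rw [sub_zero] at h2
      have h3 := norm_sub_norm_le (b x) (b 0)
      linarith
    have h2 : ‖b x‖ ^ 2 ≤ 2 * L ^ 2 * ‖x‖ ^ 2 + 2 * ‖b 0‖ ^ 2 := by
      have : ‖b x‖ ^ 2 ≤ (L * ‖x‖ + ‖b 0‖) ^ 2 := by gcongr
      nlinarith [sq_nonneg (L * ‖x‖ - ‖b 0‖)]
    have h3 : h * @inner ℝ _ _ x (b x) ≤ h * (M - K / 2 * ‖x‖ ^ 2) := by gcongr; exact hly x
    have h4 : h ^ 2 * ‖b x‖ ^ 2 ≤ h ^ 2 * (2 * L ^ 2 * ‖x‖ ^ 2 + 2 * ‖b 0‖ ^ 2) := by gcongr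
    nlinarith
  have key : ∀ n, Integrable (fun ω => ‖X n ω‖ ^ 2) ℙ ∧
      ∫ ω, ‖X n ω‖ ^ 2 ∂ℙ ≤ ∫ ω, ‖X 0 ω‖ ^ 2 ∂ℙ + B := fun n => by
    induction n with
    | zero => exact ⟨hX0sq, by linarith⟩
    | succ n ih =>
      obtain ⟨ihi, ihb⟩ := ih
      have hYm : Measurable (fun ω => X n ω + h • b (X n ω)) :=
        (hXm n).add ((hbm.comp (hXm n)).const_smul h)
      have hdom : Integrable (fun ω => (1 - h * (K - 2 * h * L ^ 2)) * ‖X n ω‖ ^ 2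
          + h * (2 * M + 2 * h * ‖b 0‖ ^ 2)) ℙ := (ihi.const_mul _).add (integrable_const _)
      have hYi : Integrable (fun ω => ‖X n ω + h • b (X n ω)‖ ^ 2) ℙ := by
        refine hdom.mono' (hYm.norm.pow_const 2).aestronglyMeasurable
          (Filter.Eventually.of_forall fun ω => ?_)
        rw [Real.norm_of_nonneg (by positivity)]
        exact hpt _
      have hind : IndepFun (fun ω => X n ω + h • b (X n ω)) (ξ (n + 1)) ℙ :=
        (hXξ n).comp (φ := fun x => x + h • b x) (ψ := id)
          (measurable_id.add (hbm.const_smul h)) measurable_id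
      obtain ⟨hi, he⟩ := aux_step hYm (hξmeas (n + 1)) (hξlaw (n + 1) (by omega)) hind hYi h hh.le
      simp only [← hrec] at hi he
      refine ⟨hi, ?_⟩
      rw [he]
      have hle := integral_mono hYi hdom (fun ω => hpt (X n ω))
      rw [integral_add (ihi.const_mul _) (integrable_const _), integral_const_mul,
        integral_const] at hle
      simp only [probReal_univ, one_smul] at hle
      have hE0 : 0 ≤ ∫ ω, ‖X 0 ω‖ ^ 2 ∂ℙ := integral_nonneg fun ω => by positivity
      set E0 := ∫ ω, ‖X 0 ω‖ ^ 2 ∂ℙ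
      have hmul := mul_le_mul_of_nonneg_left ihb hρ0
      have hd0 : (0 : ℝ) ≤ d := Nat.cast_nonneg d
      have h1 : 0 ≤ h * (K - 2 * h * L ^ 2) * E0 := by
        have : 0 ≤ K - 2 * h * L ^ 2 := by nlinarith
        positivity
      have h2 : h * (2 * M + 2 * h * ‖b 0‖ ^ 2) + h * d ≤ h * (K - 2 * h * L ^ 2) * B := by
        have h3 : h * (K - 2 * h * L ^ 2) * B
            = h * (2 * (B * (K / 2 - 2 * h * L ^ 2)) + 2 * h * L ^ 2 * B) := by ring
        rw [h3, hBq, ← mul_add]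
        have h4 : 0 ≤ 2 * h * L ^ 2 * B := by positivity
        have h5 : 0 ≤ h * ‖b 0‖ ^ 2 := by positivity
        refine mul_le_mul_of_nonneg_left ?_ hh.le
        linarith
      linarith
  exact (key k).2
end
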